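/- Let A, B ∈ Mₙ(ℂ) be positive definite Hermitian matrices. Then B is an exact interpolation matrix for A (i.e., for every T ∈ Mₙ(ℂ), TᴴT ≤ I and TᴴAT ≤ A imply TᴴBT ≤ B) if and only if there exists a function h of class P′, that is, h(λ) = c + ∫_{[0,∞)} (1+t)λ/(1+tλ) dρ(t) for some constant c ≥ 0 and finite positive Borel measure ρ on [0,∞), such that B = h(A). -/

import Mathlib

/-!
Diagonalizing `A` reduces everything to weights. Exactness tested on diagonal sign matrices makes
`B` diagonal in an eigenbasis of `A`, so `A = diag(a)` and `B = diag(b)`.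

If `b = h(a)` with `h` of class `P′`, it suffices to treat one kernel
`(1 + t) λ / (1 + t λ)` and integrate. The corresponding quadratic form is, up to the factor
`1 + t`, an infimum of `∑ aᵢ |yᵢ|² + t ∑ |zᵢ|²` over decompositions `x = y + t z`
(a parallel sum), and such an infimum cannot increase under a map contracting both forms
(`kernel_contraction`).

Conversely, let `b` be exact. Inserting `T = 1 - ε G` and letting `ε` be small turns exactness into
a linear implication between accretivity conditions on `G`. By duality (Hahn-Banach and the
closedness of the cone, `mem_pencilCone_of_dual`) this yields positive semidefinite `P`, `Q` with
`P + Q diag(1 / a) = 1 wᵀ`, where `1` is the all-ones vector and `w = 1 / b`. Diagonalizing the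
forms `P` and `Q` simultaneously, `P = G S Gᴴ` and `Q = G (1 - S) Gᴴ`
(`exists_simultaneous_diag`), and cancelling `G` gives
`star (G i k) * (s k + (1 - s k) / a i) = u k / b i` with `G u = 1`. Eliminating `G` gives
`b i = ∑ k, |u k|² a i / (s k * a i + (1 - s k))`, which is a function of class `P′` with a finitely
supported measure: `s k < 1` is an atom at `t = s k / (1 - s k)`, and `s k = 1` contributes to the
constant.
-/

open Matrix MeasureTheory
open scoped ComplexOrder

/-- Loewner order on complex `n × n` matrices: `LoewnerLE A B` iff `B - A` is
positive semidefinite (i.e. `A ≤ B`). -/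
def LoewnerLE {n : ℕ} (A B : Matrix (Fin n) (Fin n) ℂ) : Prop := (B - A).PosSemidef

/-- Functional calculus for Hermitian matrices: apply `h : ℝ → ℝ` to each eigenvalue
in a spectral decomposition of `A` (junk value `0` for non-Hermitian input). -/
noncomputable def matFunCalc {n : ℕ} (h : ℝ → ℝ) (A : Matrix (Fin n) (Fin n) ℂ) :
    Matrix (Fin n) (Fin n) ℂ :=
  if hA : A.IsHermitian then
    (hA.eigenvectorUnitary : Matrix (Fin n) (Fin n) ℂ) *
      diagonal (fun i => (h (hA.eigenvalues i) : ℂ)) *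
      star (hA.eigenvectorUnitary : Matrix (Fin n) (Fin n) ℂ)
  else 0

/-! ### Simultaneous diagonalization of positive semidefinite matrices -/

lemma exists_spectral {n : ℕ} {M : Matrix (Fin n) (Fin n) ℂ} (hM : M.PosSemidef) :
    ∃ (U : Matrix (Fin n) (Fin n) ℂ) (d : Fin n → ℝ), Uᴴ * U = 1 ∧ U * Uᴴ = 1 ∧
      (∀ i, 0 ≤ d i) ∧ M = U * diagonal (fun i => (d i : ℂ)) * Uᴴ := by
  refine ⟨hM.1.eigenvectorUnitary, hM.1.eigenvalues, ?_, ?_, hM.eigenvalues_nonneg, ?_⟩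
  · exact Unitary.coe_star_mul_self hM.1.eigenvectorUnitary
  · exact Unitary.coe_mul_star_self hM.1.eigenvectorUnitary
  · exact hM.1.spectral_theorem

/-- A positive semidefinite matrix `M` has a Hermitian square root `R` together with a Hermitian
pseudo-inverse `Z` of that root; `R * Z = Z * R` is the orthogonal projection onto the range
of `M`. -/
lemma exists_sqrt_pinv {n : ℕ} {M : Matrix (Fin n) (Fin n) ℂ} (hM : M.PosSemidef) :
    ∃ R Z : Matrix (Fin n) (Fin n) ℂ, Rᴴ = R ∧ Zᴴ = Z ∧ R * R = M ∧ R * Z = Z * R ∧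
      R * Z * R = R := by
  obtain ⟨U, d, hU, -, hd, rfl⟩ := exists_spectral hM
  have key : ∀ e f : Fin n → ℂ, (U * diagonal e * Uᴴ) * (U * diagonal f * Uᴴ) =
      U * diagonal (fun i => e i * f i) * Uᴴ := by
    intro e f
    calc _ = U * diagonal e * (Uᴴ * U) * diagonal f * Uᴴ := by simp only [Matrix.mul_assoc]
      _ = _ := by rw [hU, Matrix.mul_one, Matrix.mul_assoc U, diagonal_mul_diagonal]
  have herm : ∀ e : Fin n → ℝ, (U * diagonal (fun i => (e i : ℂ)) * Uᴴ)ᴴ =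
      U * diagonal (fun i => (e i : ℂ)) * Uᴴ := by
    intro e
    rw [conjTranspose_mul, conjTranspose_mul, conjTranspose_conjTranspose,
      diagonal_conjTranspose, Matrix.mul_assoc]
    congr 3
    ext i
    simp
  -- `0⁻¹ = 0` makes the entrywise inverse of the eigenvalues a pseudo-inverse.
  refine ⟨U * diagonal (fun i => ((√(d i) : ℝ) : ℂ)) * Uᴴ,
    U * diagonal (fun i => (((√(d i))⁻¹ : ℝ) : ℂ)) * Uᴴ, herm _, herm _, ?_, ?_, ?_⟩
  · rw [key]
    congr 3
    ext i
    rw [← Complex.ofReal_mul, Real.mul_self_sqrt (hd i)]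
  · rw [key, key]
    congr 3
    ext i
    ring
  · rw [key, key]
    congr 3
    ext i
    rw [← Complex.ofReal_mul, ← Complex.ofReal_mul, mul_inv_mul_cancel]

lemma mul_eq_zero_of_sandwich {n : ℕ} {P X : Matrix (Fin n) (Fin n) ℂ} (hP : P.PosSemidef)
    (h : Xᴴ * P * X = 0) : P * X = 0 := by
  obtain ⟨R, Z, hR, -, hRR, -, -⟩ := exists_sqrt_pinv hP
  have : (R * X)ᴴ * (R * X) = 0 := by
    rw [conjTranspose_mul, hR, ← h, ← hRR]; simp only [Matrix.mul_assoc]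
  rw [conjTranspose_mul_self_eq_zero] at this
  rw [← hRR, Matrix.mul_assoc, this, Matrix.mul_zero]

lemma mul_eq_zero_of_add_sandwich {n : ℕ} {P Q X : Matrix (Fin n) (Fin n) ℂ}
    (hP : P.PosSemidef) (hQ : Q.PosSemidef) (h : (P + Q) * X = 0) : P * X = 0 := by
  apply mul_eq_zero_of_sandwich hP
  have h1 := hP.conjTranspose_mul_mul_same X
  have h2 := hQ.conjTranspose_mul_mul_same X
  have h3 : Xᴴ * P * X + Xᴴ * Q * X = 0 := by
    rw [← Matrix.add_mul, ← Matrix.mul_add, Matrix.mul_assoc, h, Matrix.mul_zero]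
  open scoped MatrixOrder in
  exact le_antisymm (by rw [eq_neg_of_add_eq_zero_left h3]; simpa using h2.nonneg) h1.nonneg

/-- Simultaneous diagonalization of two positive semidefinite forms `P`, `Q`, without assuming
`P + Q` invertible: `P = G S Gᴴ` and `Q = G (1 - S) Gᴴ` with `0 ≤ S ≤ 1` diagonal, and the left
factor `G` can be cancelled by means of `K`. -/
lemma exists_simultaneous_diag {n : ℕ} {P Q : Matrix (Fin n) (Fin n) ℂ}
    (hP : P.PosSemidef) (hQ : Q.PosSemidef) :
    ∃ (G K : Matrix (Fin n) (Fin n) ℂ) (s : Fin n → ℝ), (∀ k, 0 ≤ s k) ∧ (∀ k, s k ≤ 1) ∧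
      G * (K * P) = P ∧ G * (K * Q) = Q ∧ K * P = diagonal (fun k => (s k : ℂ)) * Gᴴ ∧
      K * Q = (1 - diagonal (fun k => (s k : ℂ))) * Gᴴ := by
  obtain ⟨R, Z, hR, hZ, hRR, hRZ, hRZR⟩ := exists_sqrt_pinv (hP.add hQ)
  have hN : (P + Q) * (1 - Z * R) = 0 := by
    rw [← hRR, Matrix.mul_sub, Matrix.mul_one, ← hRZ, Matrix.mul_assoc R R, ← Matrix.mul_assoc R R Z,
      Matrix.mul_assoc R R Z, hRZ, ← Matrix.mul_assoc R Z R, hRZR, sub_self]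
  have hPN : P * (Z * R) = P := by
    have := mul_eq_zero_of_add_sandwich hP hQ hN
    rw [Matrix.mul_sub, Matrix.mul_one, sub_eq_zero] at this
    exact this.symm
  have hQN : Q * (Z * R) = Q := by
    have := mul_eq_zero_of_add_sandwich hQ hP (by rwa [add_comm])
    rw [Matrix.mul_sub, Matrix.mul_one, sub_eq_zero] at this
    exact this.symm
  have hNP : R * (Z * P) = P := by
    have := congrArg conjTranspose hPN
    simpa only [conjTranspose_mul, hR, hZ, hP.1.eq, Matrix.mul_assoc] using this
  have hNQ : R * (Z * Q) = Q := by
    have := congrArg conjTranspose hQN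
    simpa only [conjTranspose_mul, hR, hZ, hQ.1.eq, Matrix.mul_assoc] using this
  have hE : (Z * P * Z).PosSemidef := by
    have := hP.conjTranspose_mul_mul_same Z
    rwa [hZ] at this
  have hEQ : (Z * Q * Z).PosSemidef := by
    have := hQ.conjTranspose_mul_mul_same Z
    rwa [hZ] at this
  have hsum : Z * P * Z + Z * Q * Z = Z * R := by
    rw [← Matrix.add_mul, ← Matrix.mul_add, ← hRR]
    calc Z * (R * R) * Z = Z * (R * (R * Z)) := by simp only [Matrix.mul_assoc]
      _ = Z * (R * Z * R) := by rw [Matrix.mul_assoc R Z R, hRZ]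
      _ = _ := by rw [hRZR]
  have h1N : (1 - Z * R).PosSemidef := by
    have h := posSemidef_conjTranspose_mul_self (1 - Z * R)
    have : (1 - Z * R)ᴴ * (1 - Z * R) = 1 - Z * R := by
      rw [conjTranspose_sub, conjTranspose_mul, hR, hZ, conjTranspose_one, hRZ, Matrix.sub_mul,
        Matrix.one_mul, Matrix.mul_sub, Matrix.mul_one]
      have : Z * R * (Z * R) = Z * R := by
        rw [Matrix.mul_assoc, ← Matrix.mul_assoc R, hRZR]
      rw [this, sub_self, sub_zero]
    rwa [this] at h
  have h1E : (1 - Z * P * Z).PosSemidef := by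
    have : 1 - Z * P * Z = Z * Q * Z + (1 - Z * R) := by rw [← hsum]; abel
    rw [this]
    exact hEQ.add h1N
  obtain ⟨W, s, hW, hW', hs, hWs⟩ := exists_spectral hE
  have hWE : Wᴴ * (Z * P * Z) = diagonal (fun k => (s k : ℂ)) * Wᴴ := by
    rw [hWs, ← Matrix.mul_assoc, ← Matrix.mul_assoc, hW, Matrix.one_mul]
  have hs1 : ∀ k, s k ≤ 1 := by
    intro k
    have h := h1E.conjTranspose_mul_mul_same W
    have h2 : Wᴴ * (1 - Z * P * Z) * W = diagonal (fun k => ((1 - s k : ℝ) : ℂ)) := by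
      rw [Matrix.mul_sub, Matrix.sub_mul, hWE, Matrix.mul_one, Matrix.mul_assoc _ Wᴴ, hW,
        Matrix.mul_one, ← diagonal_one, diagonal_sub]
      simp
    rw [h2, posSemidef_diagonal_iff] at h
    have := h k
    rw [Complex.zero_le_real] at this
    linarith
  have hG : (R * W)ᴴ = Wᴴ * R := by rw [conjTranspose_mul, hR]
  have hGK : ∀ Y : Matrix (Fin n) (Fin n) ℂ, R * W * (Wᴴ * Z * Y) = R * (Z * Y) := by
    intro Y
    calc _ = R * (W * Wᴴ) * (Z * Y) := by simp only [Matrix.mul_assoc]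
      _ = _ := by rw [hW', Matrix.mul_one]
  have hKP : Wᴴ * Z * P = diagonal (fun k => (s k : ℂ)) * (Wᴴ * R) := by
    rw [← Matrix.mul_assoc, ← hWE]
    conv_lhs => rw [← hPN]
    simp only [Matrix.mul_assoc]
  refine ⟨R * W, Wᴴ * Z, s, hs, hs1, ?_, ?_, ?_, ?_⟩
  · rw [hGK, hNP]
  · rw [hGK, hNQ]
  · rw [hG, hKP]
  · rw [hG, Matrix.sub_mul, Matrix.one_mul, ← hKP]
    have : Wᴴ * Z * Q + Wᴴ * Z * P = Wᴴ * R := by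
      rw [← Matrix.mul_add, add_comm Q, ← hRR, Matrix.mul_assoc, ← Matrix.mul_assoc Z, ← hRZ, hRZR]
    rw [← this, add_sub_cancel_right]

/-! ### The cone of matrices `P + Q diag(c)` -/

lemma norm_apply_le_of_posSemidef {n : ℕ} {Z : Matrix (Fin n) (Fin n) ℂ} (hZ : Z.PosSemidef)
    (i j : Fin n) : ‖Z i j‖ ≤ (Z i i).re + (Z j j).re := by
  have hji : Z j i = star (Z i j) := (hZ.1.apply j i).symm
  have key : ∀ ζ : ℂ, 0 ≤ (Z i i).re + ‖ζ‖ ^ 2 * (Z j j).re + 2 * (ζ * Z i j).re := by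
    intro ζ
    have h := hZ.re_dotProduct_nonneg (Pi.single i 1 + Pi.single j ζ)
    simp only [star_add, Pi.star_single, mulVec_add, add_dotProduct, dotProduct_add,
      mulVec_single, single_dotProduct, hji, star_one, one_mul, Pi.smul_apply,
      MulOpposite.smul_eq_mul_unop, MulOpposite.unop_op, col_apply, mul_one, map_add] at h
    simp only [Complex.star_def, RCLike.re_to_complex, Complex.mul_re, Complex.mul_im,
      Complex.conj_re, Complex.conj_im, Complex.sq_norm, Complex.normSq_apply] at h ⊢
    have him : (Z j j).im = 0 := by
      have := congrArg Complex.im (hZ.1.apply j j)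
      simp at this
      linarith
    rw [him] at h
    linarith
  have h1 := key 1
  have h2 := key (-1)
  have h3 := key Complex.I
  have h4 := key (-Complex.I)
  simp at h1 h2 h3 h4
  have := Complex.norm_le_abs_re_add_abs_im (Z i j)
  have h5 : |(Z i j).re| ≤ ((Z i i).re + (Z j j).re) / 2 := abs_le.2 ⟨by linarith, by linarith⟩
  have h6 : |(Z i j).im| ≤ ((Z i i).re + (Z j j).re) / 2 := abs_le.2 ⟨by linarith, by linarith⟩
  linarith

lemma isClosed_posSemidef (n : ℕ) : IsClosed {M : Matrix (Fin n) (Fin n) ℂ | M.PosSemidef} := by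
  have : {M : Matrix (Fin n) (Fin n) ℂ | M.PosSemidef} =
      {M | Mᴴ = M} ∩ ⋂ x : Fin n → ℂ, {M | 0 ≤ star x ⬝ᵥ M *ᵥ x} := by
    ext M
    simp only [Set.mem_ofPred_eq, Set.mem_inter_iff, Set.mem_iInter]
    exact ⟨fun h => ⟨h.1, h.dotProduct_mulVec_nonneg⟩,
      fun h => PosSemidef.of_dotProduct_mulVec_nonneg h.1 h.2⟩
  rw [this]
  refine (isClosed_eq (by fun_prop) (by fun_prop)).inter (isClosed_iInter fun x => ?_)
  exact isClosed_le (by fun_prop) (by fun_prop)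

lemma isCompact_entries_le (n : ℕ) (r : ℝ) :
    IsCompact {M : Matrix (Fin n) (Fin n) ℂ | ∀ i j, ‖M i j‖ ≤ r} := by
  have : {M : Matrix (Fin n) (Fin n) ℂ | ∀ i j, ‖M i j‖ ≤ r} =
      Set.pi Set.univ (fun _ : Fin n => Set.pi Set.univ
        (fun _ : Fin n => Metric.closedBall (0 : ℂ) r)) := by
    ext M
    exact ⟨fun h i _ j _ => mem_closedBall_zero_iff.2 (h i j),
      fun h i j => mem_closedBall_zero_iff.1 (h i trivial j trivial)⟩
  rw [this]
  exact isCompact_univ_pi fun _ => isCompact_univ_pi fun _ => isCompact_closedBall _ _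

/-- The convex cone `{P + Q diag(c) | P, Q ≥ 0}`. -/
def pencilCone {n : ℕ} (c : Fin n → ℝ) : Set (Matrix (Fin n) (Fin n) ℂ) :=
  {M | ∃ P Q : Matrix (Fin n) (Fin n) ℂ, P.PosSemidef ∧ Q.PosSemidef ∧
    M = P + Q * diagonal (fun i => (c i : ℂ))}

/-- The cone is closed because the trace of `P + Q diag(c)` bounds both `P` and `Q`. -/
lemma isClosed_pencilCone {n : ℕ} (c : Fin n → ℝ) (hc : ∀ i, 0 < c i) :
    IsClosed (pencilCone c) := by
  rw [← closure_subset_iff_isClosed]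
  intro M hM
  set r : ℝ := M.trace.re + 1 with hr
  let φ : Matrix (Fin n) (Fin n) ℂ × Matrix (Fin n) (Fin n) ℂ → Matrix (Fin n) (Fin n) ℂ :=
    fun X => X.1 + X.2 * diagonal (fun i => (c i : ℂ))
  set D : ℝ := ∑ i, (c i)⁻¹ with hD
  let K : Set (Matrix (Fin n) (Fin n) ℂ × Matrix (Fin n) (Fin n) ℂ) :=
    ({X | ∀ i j, ‖X i j‖ ≤ 2 * r} ∩ {X | X.PosSemidef}) ×ˢ
      ({X | ∀ i j, ‖X i j‖ ≤ 2 * (D * r)} ∩ {X | X.PosSemidef})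
  have hK : IsCompact K :=
    ((isCompact_entries_le n _).inter_right (isClosed_posSemidef n)).prod
      ((isCompact_entries_le n _).inter_right (isClosed_posSemidef n))
  have hφ : Continuous φ := by fun_prop
  have hcl : IsClosed (φ '' K) := (hK.image hφ).isClosed
  have hopen : IsOpen {X : Matrix (Fin n) (Fin n) ℂ | X.trace.re < r} :=
    isOpen_lt (by fun_prop) (by fun_prop)
  have hM' : M ∈ closure ({X : Matrix (Fin n) (Fin n) ℂ | X.trace.re < r} ∩ pencilCone c) :=
    hopen.inter_closure ⟨by simp [hr], hM⟩
  have hsub : {X : Matrix (Fin n) (Fin n) ℂ | X.trace.re < r} ∩ pencilCone c ⊆ φ '' K := by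
    rintro X ⟨hX, P, Q, hP, hQ, rfl⟩
    refine ⟨(P, Q), ⟨⟨?_, hP⟩, ⟨?_, hQ⟩⟩, rfl⟩
    all_goals
      have hP0 : ∀ i, 0 ≤ (P i i).re := fun i => (Complex.le_def.1 (hP.diag_nonneg (i := i))).1
      have hQ0 : ∀ i, 0 ≤ (Q i i).re := fun i => (Complex.le_def.1 (hQ.diag_nonneg (i := i))).1
      have htr : ∑ i, ((P i i).re + (Q i i).re * c i) < r := by
        have : (P + Q * diagonal (fun i => (c i : ℂ))).trace.re < r := hX
        simpa [trace, mul_diagonal] using this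
      have hi : ∀ i, (P i i).re + (Q i i).re * c i ≤ r := fun i =>
        (Finset.single_le_sum (f := fun i => (P i i).re + (Q i i).re * c i)
          (fun j _ => add_nonneg (hP0 j) (mul_nonneg (hQ0 j) (hc j).le))
          (Finset.mem_univ i)).trans htr.le
    · intro i j
      have h := norm_apply_le_of_posSemidef hP i j
      have h1 := hi i
      have h2 := hi j
      have h3 := mul_nonneg (hQ0 i) (hc i).le
      have h4 := mul_nonneg (hQ0 j) (hc j).le
      show ‖P i j‖ ≤ _
      linarith
    · have hQi : ∀ i, (Q i i).re ≤ D * r := by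
        intro i
        have h1 : (c i)⁻¹ ≤ D := Finset.single_le_sum (f := fun i => (c i)⁻¹)
          (fun j _ => (inv_pos.2 (hc j)).le) (Finset.mem_univ i)
        have h2 : (Q i i).re * c i ≤ r := by linarith [hi i, hP0 i]
        calc (Q i i).re = (c i)⁻¹ * ((Q i i).re * c i) := by
              field_simp [(hc i).ne']
          _ ≤ D * r := mul_le_mul h1 h2 (mul_nonneg (hQ0 i) (hc i).le)
              ((inv_pos.2 (hc i)).le.trans h1)
      intro i j
      have h := norm_apply_le_of_posSemidef hQ i j
      show ‖Q i j‖ ≤ _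
      linarith [hQi i, hQi j]
  obtain ⟨⟨P, Q⟩, ⟨⟨-, hP⟩, ⟨-, hQ⟩⟩, rfl⟩ := closure_minimal hsub hcl hM'
  exact ⟨P, Q, hP, hQ, rfl⟩

lemma convex_pencilCone {n : ℕ} (c : Fin n → ℝ) : Convex ℝ (pencilCone c) := by
  rintro _ ⟨P, Q, hP, hQ, rfl⟩ _ ⟨P', Q', hP', hQ', rfl⟩ s t hs ht -
  refine ⟨s • P + t • P', s • Q + t • Q', (hP.smul hs).add (hP'.smul ht),
    (hQ.smul hs).add (hQ'.smul ht), ?_⟩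
  rw [Matrix.add_mul, smul_mul, smul_mul, smul_add, smul_add]
  abel

/-- Duality for the pencil cone: a matrix lies in it as soon as it pairs nonnegatively, for the real
Frobenius inner product, with every `G` such that both `G` and `G diag(c)` have positive
semidefinite Hermitian part. -/
lemma mem_pencilCone_of_dual {n : ℕ} (c : Fin n → ℝ) (hc : ∀ i, 0 < c i)
    (M : Matrix (Fin n) (Fin n) ℂ)
    (h : ∀ G : Matrix (Fin n) (Fin n) ℂ,
      (∀ x : Fin n → ℂ, 0 ≤ (∑ i, ∑ j, star (G i j) * (x i * star (x j))).re) →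
      (∀ x : Fin n → ℂ, 0 ≤ (∑ i, ∑ j, star (G i j) * (x i * star (x j) * c j)).re) →
      0 ≤ (∑ i, ∑ j, star (G i j) * M i j).re) :
    M ∈ pencilCone c := by
  by_contra hM
  have : LocallyConvexSpace ℝ (Matrix (Fin n) (Fin n) ℂ) :=
    inferInstanceAs (LocallyConvexSpace ℝ (Fin n → Fin n → ℂ))
  obtain ⟨f, u, hfu, hf⟩ := RCLike.geometric_hahn_banach_point_closed (𝕜 := ℂ)
    (convex_pencilCone c) (isClosed_pencilCone c hc) hM
  have hfG : ∀ X : Matrix (Fin n) (Fin n) ℂ,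
      f X = ∑ i, ∑ j, star (star (f (single i j 1))) * X i j := by
    intro X
    conv_lhs => rw [matrix_eq_sum_single X]
    rw [map_sum]
    refine Finset.sum_congr rfl fun i _ => ?_
    rw [map_sum]
    refine Finset.sum_congr rfl fun j _ => ?_
    have : single i j (X i j) = X i j • single i j (1 : ℂ) := by simp
    rw [this, map_smul, star_star, smul_eq_mul, mul_comm]
  have hu : u < 0 := by
    have := hf 0 ⟨0, 0, .zero, .zero, by simp⟩
    simpa using this
  -- A functional bounded below on a cone is nonnegative on it.
  have hcone : ∀ P Q : Matrix (Fin n) (Fin n) ℂ, P.PosSemidef → Q.PosSemidef →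
      0 ≤ (f (P + Q * diagonal (fun i => (c i : ℂ)))).re := by
    intro P Q hP hQ
    by_contra! hlt
    set z := (f (P + Q * diagonal (fun i => (c i : ℂ)))).re with hz
    have hk : 0 ≤ u / z := div_nonneg_of_nonpos hu.le hlt.le
    have := hf ((u / z) • (P + Q * diagonal (fun i => (c i : ℂ))))
      ⟨(u / z) • P, (u / z) • Q, hP.smul hk, hQ.smul hk, by rw [smul_add, smul_mul]⟩
    rw [← Complex.coe_smul, map_smul] at this
    simp only [smul_eq_mul, RCLike.re_to_complex, Complex.re_ofReal_mul] at this
    rw [← hz, div_mul_cancel₀ _ hlt.ne] at this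
    exact lt_irrefl _ this
  have h0 := h (of fun i j => star (f (single i j 1))) (fun x => ?_) (fun x => ?_)
  · simp only [of_apply] at h0
    rw [← hfG] at h0
    have : (f M).re < u := hfu
    linarith
  · have := hcone (vecMulVec x (star x)) 0 (posSemidef_vecMulVec_self_star x) .zero
    rw [hfG] at this
    simpa [vecMulVec_apply] using this
  · have := hcone 0 (vecMulVec x (star x)) .zero (posSemidef_vecMulVec_self_star x)
    rw [hfG] at this
    simpa [vecMulVec_apply, mul_diagonal] using this

/-! ### Exactness and weighted forms -/

/-- The Loewner inequality `Tᴴ diag(a) T ≤ diag(a)` says that `T` does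
not increase the weighted form `∑ aᵢ |xᵢ|²`. -/
lemma loewner_diagonal_iff {n : ℕ} (a : Fin n → ℝ) (T : Matrix (Fin n) (Fin n) ℂ) :
    LoewnerLE (Tᴴ * diagonal (fun i => (a i : ℂ)) * T) (diagonal (fun i => (a i : ℂ))) ↔
      ∀ x : Fin n → ℂ, ∑ i, a i * ‖(T *ᵥ x) i‖ ^ 2 ≤ ∑ i, a i * ‖x i‖ ^ 2 := by
  have hd : (diagonal (fun i => (a i : ℂ)))ᴴ = diagonal (fun i => (a i : ℂ)) := by
    rw [diagonal_conjTranspose]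
    congr 1
    ext i
    simp
  have hq : ∀ x : Fin n → ℂ, star x ⬝ᵥ (diagonal (fun i => (a i : ℂ))) *ᵥ x =
      ((∑ i, a i * ‖x i‖ ^ 2 : ℝ) : ℂ) := by
    intro x
    rw [dotProduct, Complex.ofReal_sum]
    refine Finset.sum_congr rfl fun i _ => ?_
    rw [mulVec_diagonal, Pi.star_apply, Complex.ofReal_mul, Complex.ofReal_pow,
      ← Complex.conj_mul', Complex.star_def]
    ring
  have hform : ∀ x : Fin n → ℂ, star x ⬝ᵥ (diagonal (fun i => (a i : ℂ)) -
      Tᴴ * diagonal (fun i => (a i : ℂ)) * T) *ᵥ x =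
      ((∑ i, a i * ‖x i‖ ^ 2 - ∑ i, a i * ‖(T *ᵥ x) i‖ ^ 2 : ℝ) : ℂ) := by
    intro x
    rw [sub_mulVec, dotProduct_sub, hq, Complex.ofReal_sub, ← hq (T *ᵥ x), star_mulVec,
      ← dotProduct_mulVec, mulVec_mulVec, mulVec_mulVec, Matrix.mul_assoc]
  constructor
  · intro h x
    have := h.dotProduct_mulVec_nonneg x
    rw [hform, Complex.zero_le_real] at this
    linarith
  · intro h
    refine PosSemidef.of_dotProduct_mulVec_nonneg ?_ fun x => ?_
    · rw [IsHermitian, conjTranspose_sub, conjTranspose_mul, conjTranspose_mul, hd,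
        conjTranspose_conjTranspose, Matrix.mul_assoc]
    · rw [hform, Complex.zero_le_real]
      linarith [h x]

/-- `B` is an exact interpolation matrix for `A`. -/
def IsExact {n : ℕ} (A B : Matrix (Fin n) (Fin n) ℂ) : Prop :=
  ∀ T : Matrix (Fin n) (Fin n) ℂ,
    LoewnerLE (Tᴴ * T) 1 → LoewnerLE (Tᴴ * A * T) A → LoewnerLE (Tᴴ * B * T) B

lemma loewner_one_iff {n : ℕ} (T : Matrix (Fin n) (Fin n) ℂ) :
    LoewnerLE (Tᴴ * T) 1 ↔
      ∀ x : Fin n → ℂ, ∑ i, (1 : ℝ) * ‖(T *ᵥ x) i‖ ^ 2 ≤ ∑ i, (1 : ℝ) * ‖x i‖ ^ 2 := by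
  rw [← loewner_diagonal_iff (fun _ => (1 : ℝ)) T]
  simp

lemma LoewnerLE.conj {n : ℕ} {X Y : Matrix (Fin n) (Fin n) ℂ} (h : LoewnerLE X Y)
    (U : Matrix (Fin n) (Fin n) ℂ) : LoewnerLE (Uᴴ * X * U) (Uᴴ * Y * U) := by
  have := PosSemidef.conjTranspose_mul_mul_same h U
  rwa [Matrix.mul_sub, Matrix.sub_mul] at this

lemma IsExact.conj {n : ℕ} {A B : Matrix (Fin n) (Fin n) ℂ} (h : IsExact A B)
    (U : Matrix (Fin n) (Fin n) ℂ) (hU : Uᴴ * U = 1) (hU' : U * Uᴴ = 1) :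
    IsExact (Uᴴ * A * U) (Uᴴ * B * U) := by
  intro T h1 h2
  have e1 : Uᴴᴴ * (Tᴴ * T) * Uᴴ = (U * T * Uᴴ)ᴴ * (U * T * Uᴴ) := by
    simp only [conjTranspose_mul, conjTranspose_conjTranspose]
    calc _ = U * Tᴴ * 1 * T * Uᴴ := by simp only [Matrix.mul_assoc, Matrix.one_mul]
      _ = _ := by rw [← hU]; simp only [Matrix.mul_assoc]
  have e2 : Uᴴᴴ * (Tᴴ * (Uᴴ * A * U) * T) * Uᴴ = (U * T * Uᴴ)ᴴ * A * (U * T * Uᴴ) := by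
    simp only [conjTranspose_mul, conjTranspose_conjTranspose, Matrix.mul_assoc]
  have e3 : Uᴴᴴ * (Uᴴ * A * U) * Uᴴ = A := by
    calc _ = (U * Uᴴ) * A * (U * Uᴴ) := by
          simp only [conjTranspose_conjTranspose, Matrix.mul_assoc]
      _ = A := by rw [hU', Matrix.one_mul, Matrix.mul_one]
  have e4 : Uᴴ * ((U * T * Uᴴ)ᴴ * B * (U * T * Uᴴ)) * U = Tᴴ * (Uᴴ * B * U) * T := by
    simp only [conjTranspose_mul, conjTranspose_conjTranspose]
    calc _ = (Uᴴ * U) * Tᴴ * (Uᴴ * B * U) * T * (Uᴴ * U) := by simp only [Matrix.mul_assoc]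
      _ = _ := by rw [hU, Matrix.one_mul, Matrix.mul_one]
  have k1 := h1.conj Uᴴ
  have k2 := h2.conj Uᴴ
  rw [e1, Matrix.mul_one, conjTranspose_conjTranspose, hU'] at k1
  rw [e2, e3] at k2
  have k3 := (h _ k1 k2).conj U
  rwa [e4] at k3

/-- If `A` is diagonal, testing exactness on the diagonal sign matrices, which commute with `A`,
forces `B` to be diagonal. -/
lemma apply_eq_zero_of_isExact {n : ℕ} (a : Fin n → ℝ) {B : Matrix (Fin n) (Fin n) ℂ}
    (h : IsExact (diagonal (fun i => (a i : ℂ))) B) {i j : Fin n} (hij : i ≠ j) :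
    B i j = 0 := by
  set e : Fin n → ℂ := fun k => if k = i then -1 else 1 with he
  have hee : ∀ k, star (e k) * e k = 1 := by
    intro k
    simp only [he]
    split_ifs <;> simp
  have h1 : (diagonal e)ᴴ * diagonal e = 1 := by
    rw [diagonal_conjTranspose, diagonal_mul_diagonal, ← diagonal_one]
    congr 1
    ext k
    exact hee k
  have h2 : (diagonal e)ᴴ * diagonal (fun i => (a i : ℂ)) * diagonal e =
      diagonal (fun i => (a i : ℂ)) := by
    rw [diagonal_conjTranspose, diagonal_mul_diagonal, diagonal_mul_diagonal]
    congr 1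
    ext k
    rw [mul_right_comm]
    simp only [Pi.star_apply, hee, one_mul]
  have h3 := h (diagonal e) (by rw [LoewnerLE, h1, sub_self]; exact .zero)
    (by rw [LoewnerLE, h2, sub_self]; exact .zero)
  have hent : ∀ k l, (B - (diagonal e)ᴴ * B * diagonal e) k l = B k l * (1 - star (e k) * e l) := by
    intro k l
    rw [Matrix.sub_apply, diagonal_conjTranspose, mul_diagonal, diagonal_mul, Pi.star_apply]
    ring
  have h4 := norm_apply_le_of_posSemidef h3 i j
  rw [hent, hent, hent, hee, hee] at h4
  simp [he, hij.symm] at h4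
  by_contra hne
  have h5 : (0 : ℝ) < ‖(1 : ℂ) + 1‖ := norm_pos_iff.2 (by norm_num)
  linarith [mul_pos (norm_pos_iff.2 hne) h5]

/-! ### Functions of class `P′` are exact -/

/-- The elementary kernels `(1 + t) λ / (1 + t λ)` are exact. The form with weights `a / (1 + t a)`
is the infimum of `∑ aᵢ |yᵢ|² + t ∑ |zᵢ|²` over decompositions `x = y + t z`; the optimal
decomposition of `x` is mapped by `T` to a decomposition of `T x` with no larger value. -/
lemma kernel_contraction {n : ℕ} (a : Fin n → ℝ) (ha : ∀ i, 0 < a i) (t : ℝ) (ht : 0 ≤ t)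
    (T : Matrix (Fin n) (Fin n) ℂ)
    (h1 : ∀ x : Fin n → ℂ, ∑ i, (1 : ℝ) * ‖(T *ᵥ x) i‖ ^ 2 ≤ ∑ i, (1 : ℝ) * ‖x i‖ ^ 2)
    (h2 : ∀ x : Fin n → ℂ, ∑ i, a i * ‖(T *ᵥ x) i‖ ^ 2 ≤ ∑ i, a i * ‖x i‖ ^ 2)
    (x : Fin n → ℂ) :
    ∑ i, ((1 + t) * a i) / (1 + t * a i) * ‖(T *ᵥ x) i‖ ^ 2 ≤
      ∑ i, ((1 + t) * a i) / (1 + t * a i) * ‖x i‖ ^ 2 := by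
  have hd : ∀ i, 0 < 1 + t * a i := fun i => by
    have := mul_nonneg ht (ha i).le
    linarith
  set y : Fin n → ℂ := fun i => (((1 + t * a i)⁻¹ : ℝ) : ℂ) * x i with hy
  set z : Fin n → ℂ := fun i => ((a i * (1 + t * a i)⁻¹ : ℝ) : ℂ) * x i with hz
  have hx : x = y + (t : ℂ) • z := by
    ext i
    have hne : ((1 + t * a i : ℝ) : ℂ) ≠ 0 := Complex.ofReal_ne_zero.2 (hd i).ne'
    simp only [hy, hz, Pi.add_apply, Pi.smul_apply, smul_eq_mul]
    push_cast at hne ⊢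
    field_simp
  have hopt : ∀ i, a i / (1 + t * a i) * ‖x i‖ ^ 2 = a i * ‖y i‖ ^ 2 + t * ‖z i‖ ^ 2 := by
    intro i
    have hne := (hd i).ne'
    simp only [hy, hz, norm_mul, Complex.norm_real, mul_pow, Real.norm_eq_abs, sq_abs]
    field_simp
  have hle : ∀ (i : Fin n) (p q : ℂ),
      a i / (1 + t * a i) * ‖p + (t : ℂ) * q‖ ^ 2 ≤ a i * ‖p‖ ^ 2 + t * ‖q‖ ^ 2 := by
    intro i p q
    rw [div_mul_eq_mul_div, div_le_iff₀ (hd i)]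
    simp only [Complex.sq_norm, Complex.normSq_apply, Complex.add_re, Complex.add_im,
      Complex.mul_re, Complex.mul_im, Complex.ofReal_re, Complex.ofReal_im]
    nlinarith [mul_nonneg ht (sq_nonneg (a i * p.re - q.re)),
      mul_nonneg ht (sq_nonneg (a i * p.im - q.im))]
  have key : ∑ i, a i / (1 + t * a i) * ‖(T *ᵥ x) i‖ ^ 2 ≤
      ∑ i, a i / (1 + t * a i) * ‖x i‖ ^ 2 := by
    calc ∑ i, a i / (1 + t * a i) * ‖(T *ᵥ x) i‖ ^ 2
        ≤ ∑ i, (a i * ‖(T *ᵥ y) i‖ ^ 2 + t * ‖(T *ᵥ z) i‖ ^ 2) := by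
          refine Finset.sum_le_sum fun i _ => ?_
          rw [hx, mulVec_add, mulVec_smul]
          exact hle i _ _
      _ = ∑ i, a i * ‖(T *ᵥ y) i‖ ^ 2 + t * ∑ i, (1 : ℝ) * ‖(T *ᵥ z) i‖ ^ 2 := by
          simp only [Finset.sum_add_distrib, Finset.mul_sum, one_mul]
      _ ≤ ∑ i, a i * ‖y i‖ ^ 2 + t * ∑ i, (1 : ℝ) * ‖z i‖ ^ 2 :=
          add_le_add (h2 y) (mul_le_mul_of_nonneg_left (h1 z) ht)
      _ = ∑ i, (a i * ‖y i‖ ^ 2 + t * ‖z i‖ ^ 2) := by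
          simp only [Finset.sum_add_distrib, Finset.mul_sum, one_mul]
      _ = _ := Finset.sum_congr rfl fun i _ => (hopt i).symm
  have h1t : 0 ≤ 1 + t := by linarith
  have := mul_le_mul_of_nonneg_left key h1t
  rw [Finset.mul_sum, Finset.mul_sum] at this
  simpa only [mul_div_assoc, mul_assoc] using this

lemma integrableOn_kernel (ρ : Measure ℝ) [IsFiniteMeasure ρ] (l : ℝ) (hl : 0 < l) :
    IntegrableOn (fun t : ℝ => ((1 + t) * l) / (1 + t * l)) (Set.Ici 0) ρ := by
  refine Integrable.of_bound (C := 1 + l) (Measurable.aestronglyMeasurable (by fun_prop)) ?_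
  refine (ae_restrict_iff' measurableSet_Ici).2 (Filter.Eventually.of_forall fun t ht => ?_)
  have ht0 : 0 ≤ t := ht
  have h1 := mul_nonneg ht0 hl.le
  rw [Real.norm_of_nonneg (by positivity), div_le_iff₀ (by linarith)]
  nlinarith [mul_nonneg h1 hl.le]

lemma isExact_of_integral {n : ℕ} (a : Fin n → ℝ) (ha : ∀ i, 0 < a i) (c : ℝ) (hc : 0 ≤ c)
    (ρ : Measure ℝ) [IsFiniteMeasure ρ] :
    IsExact (diagonal (fun i => (a i : ℂ))) (diagonal (fun i =>
      ((c + ∫ t in Set.Ici (0 : ℝ), ((1 + t) * a i) / (1 + t * a i) ∂ρ : ℝ) : ℂ))) := by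
  intro T h1 h2
  rw [loewner_one_iff] at h1
  rw [loewner_diagonal_iff] at h2
  refine (loewner_diagonal_iff
    (fun i => c + ∫ t in Set.Ici (0 : ℝ), ((1 + t) * a i) / (1 + t * a i) ∂ρ) T).2 fun x => ?_
  have hint : ∀ (y : Fin n → ℂ) (i : Fin n), IntegrableOn
      (fun t : ℝ => ((1 + t) * a i) / (1 + t * a i) * ‖y i‖ ^ 2) (Set.Ici 0) ρ :=
    fun y i => (integrableOn_kernel ρ (a i) (ha i)).mul_const _
  have hsplit : ∀ y : Fin n → ℂ,
      ∑ i, (c + ∫ t in Set.Ici (0 : ℝ), ((1 + t) * a i) / (1 + t * a i) ∂ρ) * ‖y i‖ ^ 2 =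
      c * ∑ i, (1 : ℝ) * ‖y i‖ ^ 2 + ∫ t in Set.Ici (0 : ℝ),
        ∑ i, ((1 + t) * a i) / (1 + t * a i) * ‖y i‖ ^ 2 ∂ρ := by
    intro y
    rw [integral_finsetSum _ fun i _ => hint y i, Finset.mul_sum, ← Finset.sum_add_distrib]
    refine Finset.sum_congr rfl fun i _ => ?_
    rw [integral_mul_const, add_mul, one_mul]
  rw [hsplit, hsplit]
  refine add_le_add (mul_le_mul_of_nonneg_left (h1 x) hc) ?_
  exact setIntegral_mono_on (integrable_finsetSum _ fun i _ => hint _ i)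
    (integrable_finsetSum _ fun i _ => hint _ i) measurableSet_Ici
    fun t ht => kernel_contraction a ha t ht T h1 h2 x

/-! ### Exact weights are given by functions of class `P′` -/

lemma exists_weighted_bound {n : ℕ} (a : Fin n → ℝ) (ha : ∀ i, 0 < a i)
    (G : Matrix (Fin n) (Fin n) ℂ) :
    ∃ L : ℝ, 0 ≤ L ∧ ∀ x : Fin n → ℂ,
      ∑ i, a i * ‖(G *ᵥ x) i‖ ^ 2 ≤ L * ∑ i, a i * ‖x i‖ ^ 2 := by
  have hD : 0 ≤ ∑ j, (a j)⁻¹ := Finset.sum_nonneg fun j _ => (inv_pos.2 (ha j)).le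
  have hg : ∀ i, 0 ≤ ∑ j, ‖G i j‖ ^ 2 := fun i => Finset.sum_nonneg fun j _ => by positivity
  refine ⟨(∑ i, a i * ∑ j, ‖G i j‖ ^ 2) * (∑ j, (a j)⁻¹),
    mul_nonneg (Finset.sum_nonneg fun i _ => mul_nonneg (ha i).le (hg i)) hD, fun x => ?_⟩
  have hx : ∑ j, ‖x j‖ ^ 2 ≤ (∑ j, (a j)⁻¹) * ∑ j, a j * ‖x j‖ ^ 2 := by
    rw [Finset.mul_sum]
    refine Finset.sum_le_sum fun j _ => ?_
    have h1 : (a j)⁻¹ ≤ ∑ j, (a j)⁻¹ := Finset.single_le_sum (f := fun i => (a i)⁻¹)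
      (fun j _ => (inv_pos.2 (ha j)).le) (Finset.mem_univ j)
    calc ‖x j‖ ^ 2 = (a j)⁻¹ * (a j * ‖x j‖ ^ 2) := by field_simp [(ha j).ne']
      _ ≤ _ := mul_le_mul_of_nonneg_right h1 (mul_nonneg (ha j).le (by positivity))
  have hi : ∀ i, ‖(G *ᵥ x) i‖ ^ 2 ≤ (∑ j, ‖G i j‖ ^ 2) * ∑ j, ‖x j‖ ^ 2 := by
    intro i
    have h1 : ‖(G *ᵥ x) i‖ ≤ ∑ j, ‖G i j‖ * ‖x j‖ := by
      rw [mulVec, dotProduct]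
      refine (norm_sum_le _ _).trans (Finset.sum_le_sum fun j _ => ?_)
      rw [norm_mul]
    exact (pow_le_pow_left₀ (norm_nonneg _) h1 2).trans
      (Finset.sum_mul_sq_le_sq_mul_sq _ _ _)
  calc ∑ i, a i * ‖(G *ᵥ x) i‖ ^ 2
      ≤ ∑ i, a i * ((∑ j, ‖G i j‖ ^ 2) * ((∑ j, (a j)⁻¹) * ∑ j, a j * ‖x j‖ ^ 2)) :=
        Finset.sum_le_sum fun i _ => mul_le_mul_of_nonneg_left
          ((hi i).trans (mul_le_mul_of_nonneg_left hx (hg i))) (ha i).le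
    _ = _ := by
        rw [mul_assoc]
        generalize (∑ j, (a j)⁻¹) * ∑ j, a j * ‖x j‖ ^ 2 = w
        rw [Finset.sum_mul]
        exact Finset.sum_congr rfl fun i _ => (mul_assoc _ _ _).symm

lemma weighted_norm_one_sub {n : ℕ} (a : Fin n → ℝ) (G : Matrix (Fin n) (Fin n) ℂ) (ε : ℝ)
    (x : Fin n → ℂ) :
    ∑ i, a i * ‖((1 - (ε : ℂ) • G) *ᵥ x) i‖ ^ 2 = ∑ i, a i * ‖x i‖ ^ 2 -
      2 * ε * ∑ i, a i * (star (x i) * (G *ᵥ x) i).re + ε ^ 2 * ∑ i, a i * ‖(G *ᵥ x) i‖ ^ 2 := by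
  rw [Finset.mul_sum, Finset.mul_sum, ← Finset.sum_sub_distrib, ← Finset.sum_add_distrib]
  refine Finset.sum_congr rfl fun i _ => ?_
  rw [sub_mulVec, one_mulVec, smul_mulVec, Pi.sub_apply, Pi.smul_apply]
  simp only [Complex.sq_norm, Complex.normSq_apply, Complex.star_def, Complex.mul_re,
    Complex.conj_re, Complex.conj_im, Complex.sub_re, Complex.sub_im, smul_eq_mul,
    Complex.mul_im, Complex.ofReal_re, Complex.ofReal_im]
  ring

/-- If `G` is strictly accretive for the weighted inner product, then `1 - ε G` is a contraction
for all small `ε > 0`. -/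
lemma contraction_of_accretive {n : ℕ} (a : Fin n → ℝ) (ha : ∀ i, 0 < a i)
    (G : Matrix (Fin n) (Fin n) ℂ) (δ : ℝ) (hδ : 0 < δ)
    (hG : ∀ x : Fin n → ℂ,
      δ * ∑ i, a i * ‖x i‖ ^ 2 ≤ ∑ i, a i * (star (x i) * (G *ᵥ x) i).re) :
    ∃ ε₀ : ℝ, 0 < ε₀ ∧ ∀ ε : ℝ, 0 < ε → ε ≤ ε₀ → ∀ x : Fin n → ℂ,
      ∑ i, a i * ‖((1 - (ε : ℂ) • G) *ᵥ x) i‖ ^ 2 ≤ ∑ i, a i * ‖x i‖ ^ 2 := by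
  obtain ⟨L, hL, hLb⟩ := exists_weighted_bound a ha G
  refine ⟨2 * δ / (L + 1), by positivity, fun ε hε hε' x => ?_⟩
  rw [weighted_norm_one_sub]
  rw [le_div_iff₀ (by positivity)] at hε'
  have hS : 0 ≤ ∑ i, a i * ‖x i‖ ^ 2 :=
    Finset.sum_nonneg fun i _ => mul_nonneg (ha i).le (by positivity)
  have h1 : ε ^ 2 * ∑ i, a i * ‖(G *ᵥ x) i‖ ^ 2 ≤ ε * (2 * δ) * ∑ i, a i * ‖x i‖ ^ 2 := by
    calc _ ≤ ε ^ 2 * (L * ∑ i, a i * ‖x i‖ ^ 2) :=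
          mul_le_mul_of_nonneg_left (hLb x) (by positivity)
      _ = ε * (ε * L) * ∑ i, a i * ‖x i‖ ^ 2 := by ring
      _ ≤ _ := by
        refine mul_le_mul_of_nonneg_right (mul_le_mul_of_nonneg_left ?_ hε.le) hS
        nlinarith
  have h2 := mul_le_mul_of_nonneg_left (hG x) hε.le
  linarith

lemma sum_star_apply_mul {n : ℕ} (G : Matrix (Fin n) (Fin n) ℂ) (x y : Fin n → ℂ) :
    (∑ i, ∑ j, star (G i j) * (y i * star (x j))).re =
      ∑ i, (star (y i) * (G *ᵥ x) i).re := by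
  rw [Complex.re_sum]
  refine Finset.sum_congr rfl fun i _ => ?_
  rw [mulVec, dotProduct, Finset.mul_sum, Complex.re_sum, Complex.re_sum]
  refine Finset.sum_congr rfl fun j _ => ?_
  simp only [Complex.star_def, Complex.mul_re, Complex.conj_re, Complex.conj_im, Complex.mul_im]
  ring

/-- Differentiating the exactness condition at `T = 1`: the matrix `1 wᵀ` with `w = 1 / b` lies in
the pencil cone of `1 / a`. -/
lemma mem_pencilCone_of_isExact {n : ℕ} (a b : Fin n → ℝ) (ha : ∀ i, 0 < a i)
    (hb : ∀ i, 0 < b i)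
    (h : IsExact (diagonal (fun i => (a i : ℂ))) (diagonal (fun i => (b i : ℂ)))) :
    (of fun _ j => (((b j)⁻¹ : ℝ) : ℂ) : Matrix (Fin n) (Fin n) ℂ) ∈
      pencilCone (fun i => (a i)⁻¹) := by
  refine mem_pencilCone_of_dual _ (fun i => inv_pos.2 (ha i)) _ fun G h1 h2 => ?_
  by_contra! hneg
  set x₀ : Fin n → ℂ := fun i => (((b i)⁻¹ : ℝ) : ℂ) with hx₀
  have hval : (∑ i, ∑ j, star (G i j) *
      (of fun _ j => (((b j)⁻¹ : ℝ) : ℂ) : Matrix (Fin n) (Fin n) ℂ) i j).re =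
      ∑ i, b i * (star (x₀ i) * (G *ᵥ x₀) i).re := by
    have := sum_star_apply_mul G x₀ (fun _ => 1)
    simp only [one_mul, star_one] at this
    have hs : ∀ j, star (x₀ j) = (((b j)⁻¹ : ℝ) : ℂ) := fun j => Complex.conj_ofReal _
    simp only [of_apply]
    simp only [hs] at this ⊢
    rw [this]
    refine Finset.sum_congr rfl fun i _ => ?_
    rw [Complex.re_ofReal_mul, ← mul_assoc, mul_inv_cancel₀ (hb i).ne', one_mul]
  rw [hval] at hneg
  set r : ℝ := ∑ i, b i * (star (x₀ i) * (G *ᵥ x₀) i).re with hr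
  set N : ℝ := ∑ i, b i * ‖x₀ i‖ ^ 2 with hN
  have hN0 : 0 ≤ N := Finset.sum_nonneg fun i _ => mul_nonneg (hb i).le (by positivity)
  -- A shift by `δ` makes the two positivity conditions strict and keeps `r + δ N < 0`.
  set δ : ℝ := -r / (2 * (N + 1)) with hδdef
  have hδ : 0 < δ := div_pos (by linarith) (by positivity)
  have hδr : r + δ * N < 0 := by
    have : δ * (2 * (N + 1)) = -r := div_mul_cancel₀ _ (by positivity)
    nlinarith
  set G' : Matrix (Fin n) (Fin n) ℂ := G + (δ : ℂ) • (1 : Matrix (Fin n) (Fin n) ℂ) with hG'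
  have hshift : ∀ (e : Fin n → ℝ) (x : Fin n → ℂ),
      ∑ i, e i * (star (x i) * (G' *ᵥ x) i).re =
        ∑ i, e i * (star (x i) * (G *ᵥ x) i).re + δ * ∑ i, e i * ‖x i‖ ^ 2 := by
    intro e x
    rw [Finset.mul_sum, ← Finset.sum_add_distrib]
    refine Finset.sum_congr rfl fun i _ => ?_
    rw [hG', add_mulVec, smul_mulVec, one_mulVec, Pi.add_apply, Pi.smul_apply]
    simp only [Complex.sq_norm, Complex.normSq_apply, Complex.star_def, Complex.mul_re,
      Complex.conj_re, Complex.conj_im, Complex.add_re, Complex.add_im, smul_eq_mul,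
      Complex.mul_im, Complex.ofReal_re, Complex.ofReal_im]
    ring
  have hone : ∀ x : Fin n → ℂ, 0 ≤ ∑ i, (1 : ℝ) * (star (x i) * (G *ᵥ x) i).re := by
    intro x
    have := h1 x
    rw [sum_star_apply_mul] at this
    simpa using this
  have haw : ∀ x : Fin n → ℂ, 0 ≤ ∑ i, a i * (star (x i) * (G *ᵥ x) i).re := by
    intro x
    have := h2 (fun i => a i * x i)
    have he : ∀ i j : Fin n, star (G i j) * ((a i : ℂ) * x i * star ((a j : ℂ) * x j) *
        (((a j)⁻¹ : ℝ) : ℂ)) = star (G i j) * (((a i : ℂ) * x i) * star (x j)) := by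
      intro i j
      have hj : (a j : ℂ) ≠ 0 := Complex.ofReal_ne_zero.2 (ha j).ne'
      simp only [star_mul, Complex.star_def, Complex.conj_ofReal, Complex.ofReal_inv]
      field_simp
    simp only [he] at this
    rw [sum_star_apply_mul G x (fun i => a i * x i)] at this
    convert this using 2 with i
    rw [star_mul', Complex.star_def, Complex.conj_ofReal, mul_assoc, Complex.re_ofReal_mul]
  obtain ⟨ε₁, hε₁, hc₁⟩ := contraction_of_accretive (fun _ => 1) (fun _ => one_pos) G' δ hδ
    (fun x => by rw [hshift (fun _ => 1)]; linarith [hone x])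
  obtain ⟨ε₂, hε₂, hc₂⟩ := contraction_of_accretive a ha G' δ hδ
    (fun x => by rw [hshift a]; linarith [haw x])
  have hε : 0 < min ε₁ ε₂ := lt_min hε₁ hε₂
  have hT := (loewner_diagonal_iff b _).1 (h (1 - ((min ε₁ ε₂ : ℝ) : ℂ) • G')
    ((loewner_one_iff _).2 (hc₁ _ hε (min_le_left _ _)))
    ((loewner_diagonal_iff a _).2 (hc₂ _ hε (min_le_right _ _)))) x₀
  rw [weighted_norm_one_sub, hshift b x₀, ← hr, ← hN] at hT
  have hpos : 0 ≤ ∑ i, b i * ‖(G' *ᵥ x₀) i‖ ^ 2 :=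
    Finset.sum_nonneg fun i _ => mul_nonneg (hb i).le (by positivity)
  nlinarith [mul_pos hε (neg_pos.2 hδr), mul_nonneg (sq_nonneg (min ε₁ ε₂)) hpos]

/-- Every exact weight is a finite nonnegative combination of the kernels
`a ↦ a / (s a + (1 - s))`, `s ∈ [0, 1]`. -/
lemma exists_combination_of_isExact {n : ℕ} (a b : Fin n → ℝ) (ha : ∀ i, 0 < a i)
    (hb : ∀ i, 0 < b i)
    (h : IsExact (diagonal (fun i => (a i : ℂ))) (diagonal (fun i => (b i : ℂ)))) :
    ∃ r s : Fin n → ℝ, (∀ k, 0 ≤ r k) ∧ (∀ k, 0 ≤ s k) ∧ (∀ k, s k ≤ 1) ∧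
      ∀ i, b i = ∑ k, r k * (a i / (s k * a i + (1 - s k))) := by
  obtain ⟨P, Q, hP, hQ, hPQ⟩ := mem_pencilCone_of_isExact a b ha hb h
  obtain ⟨G, K, s, hs0, hs1, hGP, hGQ, hKP, hKQ⟩ := exists_simultaneous_diag hP hQ
  set u : Fin n → ℂ := K *ᵥ (fun _ => 1) with hu
  set C : Matrix (Fin n) (Fin n) ℂ := diagonal (fun i => (((a i)⁻¹ : ℝ) : ℂ)) with hC
  set M : Matrix (Fin n) (Fin n) ℂ := of fun _ j => (((b j)⁻¹ : ℝ) : ℂ) with hM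
  have hKM : K * M = diagonal (fun k => (s k : ℂ)) * Gᴴ +
      (1 - diagonal (fun k => (s k : ℂ))) * Gᴴ * C := by
    rw [hPQ, Matrix.mul_add, ← Matrix.mul_assoc K Q, hKP, hKQ]
  have hGKM : G * (K * M) = M := by
    have : G * (K * (Q * C)) = Q * C := by
      rw [← Matrix.mul_assoc K, ← Matrix.mul_assoc G, hGQ]
    rw [hPQ, Matrix.mul_add, Matrix.mul_add, hGP, this]
  have hKMe : ∀ k i, (K * M) k i = u k * (((b i)⁻¹ : ℝ) : ℂ) := by
    intro k i
    rw [Matrix.mul_apply, hu, mulVec, dotProduct, Finset.sum_mul]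
    simp [hM]
  have hden : ∀ k i, 0 < s k + (1 - s k) * (a i)⁻¹ := by
    intro k i
    have h1 := inv_pos.2 (ha i)
    rcases (hs0 k).eq_or_lt with h0 | h0
    · rw [← h0]; simpa using ha i
    · have := mul_nonneg (sub_nonneg.2 (hs1 k)) h1.le
      linarith
  have hent : ∀ k i, star (G i k) * ((s k + (1 - s k) * (a i)⁻¹ : ℝ) : ℂ) =
      u k * (((b i)⁻¹ : ℝ) : ℂ) := by
    intro k i
    rw [← hKMe, hKM]
    rw [Matrix.sub_mul, Matrix.sub_mul, Matrix.one_mul, Matrix.add_apply, Matrix.sub_apply, hC, mul_diagonal,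
      mul_diagonal, diagonal_mul, conjTranspose_apply]
    push_cast
    ring
  have hGu : ∀ i, ∑ k, G i k * u k = 1 := by
    intro i
    have h1 : (G * (K * M)) i i = M i i := by rw [hGKM]
    rw [Matrix.mul_apply] at h1
    simp only [hKMe, ← mul_assoc] at h1
    rw [← Finset.sum_mul] at h1
    have hne : (((b i)⁻¹ : ℝ) : ℂ) ≠ 0 := Complex.ofReal_ne_zero.2 (inv_pos.2 (hb i)).ne'
    exact mul_right_cancel₀ hne (by rw [h1, hM, of_apply, one_mul])
  refine ⟨fun k => ‖u k‖ ^ 2, s, fun k => by positivity, hs0, hs1, fun i => ?_⟩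
  have hterm : ∀ k, G i k * u k =
      ((‖u k‖ ^ 2 * ((b i)⁻¹ * (s k + (1 - s k) * (a i)⁻¹)⁻¹) : ℝ) : ℂ) := by
    intro k
    have hne : ((s k + (1 - s k) * (a i)⁻¹ : ℝ) : ℂ) ≠ 0 :=
      Complex.ofReal_ne_zero.2 (hden k i).ne'
    have h1 : G i k * ((s k + (1 - s k) * (a i)⁻¹ : ℝ) : ℂ) =
        star (u k) * (((b i)⁻¹ : ℝ) : ℂ) := by
      have := congrArg star (hent k i)
      have hreal : ∀ y : ℝ, star (y : ℂ) = y := Complex.conj_ofReal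
      rwa [star_mul', star_mul', star_star, hreal, hreal] at this
    rw [← mul_left_inj' hne, mul_right_comm, h1, Complex.ofReal_mul, Complex.ofReal_mul,
      Complex.ofReal_inv (_ + _), Complex.ofReal_pow, ← Complex.conj_mul', ← Complex.star_def]
    generalize ((s k + (1 - s k) * (a i)⁻¹ : ℝ) : ℂ) = z at hne ⊢
    field_simp
  have hsum : ∑ k, ‖u k‖ ^ 2 * ((b i)⁻¹ * (s k + (1 - s k) * (a i)⁻¹)⁻¹) = 1 := by
    have := hGu i
    simp only [hterm] at this
    exact_mod_cast this
  calc b i = b i * ∑ k, ‖u k‖ ^ 2 * ((b i)⁻¹ * (s k + (1 - s k) * (a i)⁻¹)⁻¹) := by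
        rw [hsum, mul_one]
    _ = _ := by
      rw [Finset.mul_sum]
      refine Finset.sum_congr rfl fun k _ => ?_
      have h1 := (ha i).ne'
      have h2 := (hb i).ne'
      have h3 : s k + (1 - s k) * (a i)⁻¹ = (s k * a i + (1 - s k)) / a i := by
        field_simp
      rw [h3, inv_div]
      field_simp

lemma exists_measure_of_combination {n : ℕ} (r s : Fin n → ℝ) (hr : ∀ k, 0 ≤ r k)
    (hs0 : ∀ k, 0 ≤ s k) (hs1 : ∀ k, s k ≤ 1) :
    ∃ c : ℝ, 0 ≤ c ∧ ∃ ρ : Measure ℝ, IsFiniteMeasure ρ ∧ ∀ l : ℝ, 0 < l →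
      c + ∫ t in Set.Ici (0 : ℝ), ((1 + t) * l) / (1 + t * l) ∂ρ =
        ∑ k, r k * (l / (s k * l + (1 - s k))) := by
  -- A node `s < 1` is an atom at `t = s / (1 - s)`; the nodes `s = 1` make up the constant.
  refine ⟨∑ k, if s k < 1 then 0 else r k,
    Finset.sum_nonneg fun k _ => by split_ifs <;> simp [hr k],
    ∑ k, ENNReal.ofReal (if s k < 1 then r k else 0) • Measure.dirac (s k / (1 - s k)),
    ⟨?_⟩, fun l hl => ?_⟩
  · rw [Measure.finsetSum_apply]
    exact ENNReal.sum_lt_top.2 fun k _ => by simp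
  · rw [← integral_indicator measurableSet_Ici, integral_finsetSum_measure]
    · rw [← Finset.sum_add_distrib]
      refine Finset.sum_congr rfl fun k _ => ?_
      rw [integral_smul_measure, integral_dirac]
      by_cases hk : s k < 1
      · have hk' : 0 < 1 - s k := by linarith
        have ht : 0 ≤ s k / (1 - s k) := div_nonneg (hs0 k) hk'.le
        have h2 : 0 < s k * l + (1 - s k) := by
          have := mul_nonneg (hs0 k) hl.le
          linarith
        have h3 : 0 < 1 + s k / (1 - s k) * l := by positivity
        rw [Set.indicator_of_mem (show s k / (1 - s k) ∈ Set.Ici 0 from ht), if_pos hk,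
          if_pos hk, zero_add, ENNReal.toReal_ofReal (hr k), smul_eq_mul]
        congr 1
        have h4 : 1 + s k / (1 - s k) * l = (s k * l + (1 - s k)) / (1 - s k) := by
          field_simp
          ring
        have h5 : 1 + s k / (1 - s k) = 1 / (1 - s k) := by
          field_simp
          ring
        rw [h4, h5]
        field_simp
      · have hk1 : s k = 1 := le_antisymm (hs1 k) (not_lt.1 hk)
        rw [if_neg hk, if_neg hk, hk1]
        simp [hl.ne']
    · intro k _
      exact (integrable_dirac (by simp)).smul_measure (by simp)

/-- Donoghue's theorem, finite-dimensional form: `B` is an exact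
interpolation matrix for `A` iff `B = h(A)` for some function `h` of class `P'`,
i.e. `h(λ) = c + ∫_{[0,∞)} (1+t)λ/(1+tλ) dρ(t)`. -/
theorem donoghue_theorem_matrix (n : ℕ) (A B : Matrix (Fin n) (Fin n) ℂ)
    (hA : A.PosDef) (hB : B.PosDef) :
    (∀ T : Matrix (Fin n) (Fin n) ℂ,
        LoewnerLE (Tᴴ * T) 1 → LoewnerLE (Tᴴ * A * T) A → LoewnerLE (Tᴴ * B * T) B)
    ↔ ∃ c : ℝ, 0 ≤ c ∧ ∃ ρ : Measure ℝ, IsFiniteMeasure ρ ∧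
        B = matFunCalc
          (fun l => c + ∫ t in Set.Ici (0 : ℝ), ((1 + t) * l) / (1 + t * l) ∂ρ) A := by

  change IsExact A B ↔ _
  set U : Matrix (Fin n) (Fin n) ℂ := (hA.1.eigenvectorUnitary : Matrix (Fin n) (Fin n) ℂ) with hUdef
  set a : Fin n → ℝ := hA.1.eigenvalues with hadef
  have ha : ∀ i, 0 < a i := hA.eigenvalues_pos
  have hU : Uᴴ * U = 1 := Unitary.coe_star_mul_self hA.1.eigenvectorUnitary
  have hU' : U * Uᴴ = 1 := Unitary.coe_mul_star_self hA.1.eigenvectorUnitary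
  have hAU : A = U * diagonal (fun i => (a i : ℂ)) * Uᴴ := hA.1.spectral_theorem
  have hcalc : ∀ h : ℝ → ℝ, matFunCalc h A = U * diagonal (fun i => (h (a i) : ℂ)) * Uᴴ := by
    intro h
    rw [matFunCalc, dif_pos hA.1, star_eq_conjTranspose]
  have hcancel : ∀ X : Matrix (Fin n) (Fin n) ℂ, Uᴴ * (U * X * Uᴴ) * U = X := by
    intro X
    calc _ = (Uᴴ * U) * X * (Uᴴ * U) := by simp only [Matrix.mul_assoc]
      _ = X := by rw [hU, Matrix.one_mul, Matrix.mul_one]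
  have hcancel' : ∀ X : Matrix (Fin n) (Fin n) ℂ, U * (Uᴴ * X * U) * Uᴴ = X := by
    intro X
    calc _ = (U * Uᴴ) * X * (U * Uᴴ) := by simp only [Matrix.mul_assoc]
      _ = X := by rw [hU', Matrix.one_mul, Matrix.mul_one]
  constructor
  · intro h
    -- In the eigenbasis `U` of `A` both matrices become diagonal.
    have h' := h.conj U hU hU'
    have hAd : Uᴴ * A * U = diagonal (fun i => (a i : ℂ)) := by rw [hAU, hcancel]
    rw [hAd] at h'
    have hinj : Function.Injective U.mulVec := by
      intro x y hxy
      have := congrArg (Uᴴ.mulVec) hxy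
      simpa [mulVec_mulVec, hU] using this
    have hBpos : (Uᴴ * B * U).PosDef := hB.conjTranspose_mul_mul_same hinj
    set b : Fin n → ℝ := fun i => ((Uᴴ * B * U) i i).re with hbdef
    have hBd : Uᴴ * B * U = diagonal (fun i => (b i : ℂ)) := by
      ext i j
      by_cases hij : i = j
      · subst hij
        rw [diagonal_apply_eq]
        exact Complex.ext rfl (Complex.lt_def.1 (hBpos.diag_pos (i := i))).2.symm
      · rw [diagonal_apply_ne _ hij, apply_eq_zero_of_isExact a h' hij]
    have hb : ∀ i, 0 < b i := fun i => (Complex.lt_def.1 (hBpos.diag_pos (i := i))).1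
    rw [hBd] at h'
    obtain ⟨r, s, hr, hs0, hs1, hbs⟩ := exists_combination_of_isExact a b ha hb h'
    obtain ⟨c, hc, ρ, hρ, hρs⟩ := exists_measure_of_combination r s hr hs0 hs1
    refine ⟨c, hc, ρ, hρ, ?_⟩
    rw [hcalc, ← hcancel' B, hBd]
    congr 3
    ext i
    rw [hbs i, hρs _ (ha i)]
  · rintro ⟨c, hc, ρ, hρ, hBh⟩
    have h := (isExact_of_integral a ha c hc ρ).conj Uᴴ (by rwa [conjTranspose_conjTranspose])
      (by rwa [conjTranspose_conjTranspose])
    rw [conjTranspose_conjTranspose, ← hAU] at h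
    rw [hBh, hcalc]
    exact h
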